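/- arXiv:1403.7498 — 2 statements merged into one kernel-verified Lean document; each statement's English description precedes it below -/
import Mathlib

section
/- Let u : Δ(K×L) → ℝ be continuous and let W : Δ(K×L) → ℝ be Lipschitz continuous and L-convex, i.e. q ↦ W(q⊗P) is convex on Δ(L) for every P ∈ Δ(K)^L. Assume that for every P ∈ Δ(K)^L, the concave function η ↦ W_L^♭(P,η) := inf_{q∈Δ(L)} W(q⊗P) + ⟨q,η⟩ is a viscosity super-solution on ℝ^L of −w(η) + ⟨Dw(η),η⟩ + u_L(P,Dw(η)) ≤ 0, meaning: for every C¹ function φ : ℝ^L → ℝ such that W_L^♭(P,·) − φ has a local minimum at η ∈ ℝ^L, one has −W_L^♭(P,η) + ⟨Dφ(η),η⟩ + u(Dφ(η) ⊗ P) ≤ 0. If, for some P₀ ∈ Δ(K)^L, the map η ↦ W_L^♭(P₀,η) is differentiable at η₀ ∈ ℝ^L, then q₀ := ∇_η W_L^♭(P₀,η₀) belongs to Δ(L) and W(q₀⊗P₀) ≥ u(q₀⊗P₀). -/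
/-- `q ⊗ P ∈ Δ(K×L)`: `(q ⊗ P)(k,ℓ) = q(ℓ) P(ℓ)(k)`. -/
def tensLP {K L : Type*} (q : L → ℝ) (P : L → K → ℝ) : (K × L) → ℝ :=
  fun kl => q kl.2 * P kl.2 kl.1

/-- `W_L^♭(P, η) = inf_{q ∈ Δ(L)} W(q⊗P) + ⟨q, η⟩`. -/
noncomputable def WflatL {K L : Type*} [Fintype L]
    (W : ((K × L) → ℝ) → ℝ) (P : L → K → ℝ) (η : L → ℝ) : ℝ :=
  sInf ((fun q => W (tensLP q P) + ∑ l, q l * η l) '' stdSimplex ℝ L)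

/-!
Write `f(η) = inf_{p ∈ S} g(p) + p(η)`, with `S` a compact set of linear forms. If a `C¹` function
`φ` touches `f` from below at `η`, then every minimizer `p` at `η` equals `Dφ(η)`, because
`g(p) + p(·)` touches `f` from above at the same point. The supersolution inequality then reduces to
`u(p) ≤ g(p)`.

Such points `η` are dense, as adding a steep quadratic produces interior local minima in any small
ball. So the infimum over the compact set `{p ∈ S | u(p) ≤ g(p)}`, which is continuous in `η`,
agrees with `f` everywhere: every `η` has a minimizer with `u(p) ≤ g(p)`. Where `f` is
differentiable, that minimizer is `Df(η)`.
-/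

open Set Filter

section TestFunctions

variable {E : Type*} [NormedAddCommGroup E] [NormedSpace ℝ E]

/-- Viscosity supersolution on `E` of the first-order inequality `F(x, w(x), Dw(x)) ≤ 0`, tested by
`C¹` functions touching `w` from below. The gradient is encoded as a continuous linear form. -/
def IsViscositySupersolution (F : E → ℝ → StrongDual ℝ E → ℝ) (w : E → ℝ) : Prop :=
  ∀ φ : E → ℝ, ContDiff ℝ 1 φ → ∀ x : E, IsLocalMin (fun z => w z - φ z) x →
    F x (w x) (fderiv ℝ φ x) ≤ 0

theorem fderiv_eq_of_isLocalMax_sub {f : E → ℝ} {x : E} {p : StrongDual ℝ E}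
    (hf : DifferentiableAt ℝ f x) (hmax : IsLocalMax (fun z => f z - p z) x) :
    fderiv ℝ f x = p :=
  sub_eq_zero.mp (hmax.hasFDerivAt_eq_zero (hf.hasFDerivAt.sub p.hasFDerivAt))

variable [FiniteDimensional ℝ E]

theorem contDiff_euclideanDist_sq (x : E) (n : WithTop ℕ∞) :
    ContDiff ℝ n (fun z => Euclidean.dist z x ^ 2) := by
  simp only [Euclidean.dist, dist_eq_norm]
  exact (toEuclidean.contDiff.sub contDiff_const).norm_sq ℝ

theorem dense_setOf_exists_contDiff_isLocalMin_sub {f : E → ℝ} (hf : Continuous f)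
    (n : WithTop ℕ∞) :
    Dense {x | ∃ φ : E → ℝ, ContDiff ℝ n φ ∧ IsLocalMin (fun z => f z - φ z) x} := by
  intro x
  refine (mem_closure_iff_nhds_basis Euclidean.nhds_basis_ball).mpr fun r hr => ?_
  obtain ⟨m, hm⟩ : BddBelow (f '' Euclidean.closedBall x r) :=
    Euclidean.isCompact_closedBall.bddBelow_image hf.continuousOn
  obtain ⟨c, hc⟩ : ∃ c : ℝ, f x < m + c * r ^ 2 :=
    ⟨(f x - m + 1) / r ^ 2, by rw [div_mul_cancel₀ _ (by positivity)]; linarith⟩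
  let φ : E → ℝ := fun z => -(c * Euclidean.dist z x ^ 2)
  have hφ (k : WithTop ℕ∞) : ContDiff ℝ k φ :=
    (contDiff_const.mul (contDiff_euclideanDist_sq x k)).neg
  have center_lt_sphere : ∀ z ∈ Euclidean.closedBall x r \ Euclidean.ball x r,
      f x - φ x < f z - φ z := by
    rintro z ⟨hz, hz'⟩
    have dist_eq : Euclidean.dist z x = r := le_antisymm hz (not_lt.mp hz')
    have hmz : m ≤ f z := hm (mem_image_of_mem f hz)
    have hφx : φ x = 0 := by simp [φ, Euclidean.dist]
    simp only [hφx, φ, dist_eq]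
    linarith
  obtain ⟨y, hy, hmin⟩ := Euclidean.isCompact_closedBall.exists_isLocalMin_mem_open
    Euclidean.ball_subset_closedBall (hf.sub (hφ 0).continuous).continuousOn
    (Euclidean.ball_subset_closedBall (Euclidean.mem_ball_self hr)) center_lt_sphere
    Euclidean.isOpen_ball
  exact ⟨y, ⟨φ, hφ n, hmin⟩, hy⟩

end TestFunctions

section ConcaveConjugate

variable {E : Type*} [NormedAddCommGroup E] [NormedSpace ℝ E]
  {S : Set (StrongDual ℝ E)} {g h : StrongDual ℝ E → ℝ} {p : StrongDual ℝ E} {x : E}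

/-- The concave conjugate `x ↦ inf_{p ∈ S} g(p) + p(x)` of a function `g` on a set `S` of linear
forms. It generalizes `WflatL`, with `Δ(L)` viewed inside the dual of `ℝ^L`, so that minimizers and
derivatives live in the same space. The value is the junk `0` when `S` is empty or the infimum is
`-∞`. -/
noncomputable def concaveConjugate (S : Set (StrongDual ℝ E)) (g : StrongDual ℝ E → ℝ)
    (x : E) : ℝ :=
  sInf ((fun p => g p + p x) '' S)

theorem continuousOn_add_eval (hg : ContinuousOn g S) (x : E) :
    ContinuousOn (fun p => g p + p x) S :=
  hg.add (by fun_prop)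

theorem concaveConjugate_le (hS : IsCompact S) (hg : ContinuousOn g S) (hp : p ∈ S) (x : E) :
    concaveConjugate S g x ≤ g p + p x :=
  csInf_le (hS.bddBelow_image (continuousOn_add_eval hg x)) (mem_image_of_mem _ hp)

theorem exists_concaveConjugate_eq (hS : IsCompact S) (hne : S.Nonempty) (hg : ContinuousOn g S)
    (x : E) : ∃ p ∈ S, concaveConjugate S g x = g p + p x :=
  hS.exists_sInf_image_eq hne (continuousOn_add_eval hg x)

theorem continuous_concaveConjugate (hS : IsCompact S) (hg : ContinuousOn g S) :
    Continuous (concaveConjugate S g) := by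
  have : CompactSpace S := isCompact_iff_compactSpace.mp hS
  have image_eq (x : E) :
      (fun p => g p + p x) '' S = (fun p : S => g p + (p : StrongDual ℝ E) x) '' univ := by
    rw [image_univ, image_eq_range]
  have jointly_continuous :
      Continuous fun y : E × S => g y.2 + (y.2 : StrongDual ℝ E) y.1 :=
    ((continuousOn_iff_continuous_domRestrict.mp hg).comp continuous_snd).add
      ((continuous_subtype_val.comp continuous_snd).clm_apply continuous_fst)
  unfold concaveConjugate
  simp only [image_eq]
  exact isCompact_univ.continuous_sInf jointly_continuous

theorem isLocalMax_concaveConjugate_sub (hS : IsCompact S) (hg : ContinuousOn g S) (hp : p ∈ S)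
    (hpx : concaveConjugate S g x = g p + p x) :
    IsLocalMax (fun z => concaveConjugate S g z - p z) x :=
  Eventually.of_forall fun z => by
    have hz := concaveConjugate_le hS hg hp z
    beta_reduce
    linarith

theorem fderiv_eq_of_isLocalMin_concaveConjugate_sub (hS : IsCompact S) (hg : ContinuousOn g S)
    (hp : p ∈ S) (hpx : concaveConjugate S g x = g p + p x) {φ : E → ℝ}
    (hφ : DifferentiableAt ℝ φ x) (hmin : IsLocalMin (fun z => concaveConjugate S g z - φ z) x) :
    fderiv ℝ φ x = p := by
  refine fderiv_eq_of_isLocalMax_sub hφ ?_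
  simpa only [sub_sub_sub_cancel_left] using
    (isLocalMax_concaveConjugate_sub hS hg hp hpx).sub hmin

theorem IsViscositySupersolution.le_of_isLocalMin_sub
    (hsuper : IsViscositySupersolution (fun x r p => -r + p x + h p) (concaveConjugate S g))
    (hS : IsCompact S) (hg : ContinuousOn g S) (hp : p ∈ S)
    (hpx : concaveConjugate S g x = g p + p x) {φ : E → ℝ} (hφ : ContDiff ℝ 1 φ)
    (hmin : IsLocalMin (fun z => concaveConjugate S g z - φ z) x) : h p ≤ g p := by
  have fderiv_eq : fderiv ℝ φ x = p :=
    fderiv_eq_of_isLocalMin_concaveConjugate_sub hS hg hp hpx (hφ.differentiable one_ne_zero x) hmin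
  have super_ineq := hsuper φ hφ x hmin
  rw [fderiv_eq, hpx] at super_ineq
  linarith

variable [FiniteDimensional ℝ E]

theorem IsViscositySupersolution.exists_concaveConjugate_eq_and_le
    (hS : IsCompact S) (hne : S.Nonempty) (hg : ContinuousOn g S) (hh : ContinuousOn h S)
    (hsuper : IsViscositySupersolution (fun x r p => -r + p x + h p) (concaveConjugate S g))
    (x : E) : ∃ p ∈ S, concaveConjugate S g x = g p + p x ∧ h p ≤ g p := by
  let A : Set (StrongDual ℝ E) := {p ∈ S | h p ≤ g p}
  have hA : IsCompact A := hS.of_isClosed_subset (hS.isClosed.isClosed_le hh hg) (sep_subset _ _)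
  have hgA : ContinuousOn g A := hg.mono (sep_subset _ _)
  have touching_dense := dense_setOf_exists_contDiff_isLocalMin_sub
    (continuous_concaveConjugate hS hg) 1
  have exists_mem_A {y : E} : (∃ φ : E → ℝ, ContDiff ℝ 1 φ ∧
      IsLocalMin (fun z => concaveConjugate S g z - φ z) y) →
      ∃ p ∈ A, concaveConjugate S g y = g p + p y := by
    rintro ⟨φ, hφ, hmin⟩
    obtain ⟨p, hp, hpy⟩ := exists_concaveConjugate_eq hS hne hg y
    exact ⟨p, ⟨hp, hsuper.le_of_isLocalMin_sub hS hg hp hpy hφ hmin⟩, hpy⟩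
  have conj_A_le : concaveConjugate A g x ≤ concaveConjugate S g x := by
    refine touching_dense.induction ?_ (isClosed_le (continuous_concaveConjugate hA hgA)
      (continuous_concaveConjugate hS hg)) x
    intro y hy
    obtain ⟨p, hp, hpy⟩ := exists_mem_A hy
    exact hpy ▸ concaveConjugate_le hA hgA hp y
  obtain ⟨y, hy⟩ := touching_dense.nonempty
  obtain ⟨q, hq, -⟩ := exists_mem_A hy
  obtain ⟨p, hp, hpx⟩ := exists_concaveConjugate_eq hA ⟨q, hq⟩ hgA x
  exact ⟨p, hp.1, (concaveConjugate_le hS hg hp.1 x).antisymm (hpx ▸ conj_A_le), hp.2⟩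

theorem IsViscositySupersolution.fderiv_concaveConjugate_mem_and_le
    (hS : IsCompact S) (hne : S.Nonempty) (hg : ContinuousOn g S) (hh : ContinuousOn h S)
    (hsuper : IsViscositySupersolution (fun x r p => -r + p x + h p) (concaveConjugate S g))
    (hdiff : DifferentiableAt ℝ (concaveConjugate S g) x) :
    fderiv ℝ (concaveConjugate S g) x ∈ S ∧
      h (fderiv ℝ (concaveConjugate S g) x) ≤ g (fderiv ℝ (concaveConjugate S g) x) := by
  obtain ⟨p, hp, hpx, hle⟩ := hsuper.exists_concaveConjugate_eq_and_le hS hne hg hh x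
  rw [fderiv_eq_of_isLocalMax_sub hdiff (isLocalMax_concaveConjugate_sub hS hg hp hpx)]
  exact ⟨hp, hle⟩

end ConcaveConjugate

section Simplex

variable {K L : Type*} [Fintype L]

theorem tensLP_mem_stdSimplex [Fintype K] {q : L → ℝ} {P : L → K → ℝ} (hq : q ∈ stdSimplex ℝ L)
    (hP : ∀ l, P l ∈ stdSimplex ℝ K) : tensLP q P ∈ stdSimplex ℝ (K × L) := by
  refine ⟨fun kl => mul_nonneg (hq.1 _) ((hP _).1 _), ?_⟩
  simp only [Fintype.sum_prod_type_right, tensLP, ← Finset.mul_sum, (hP _).2, mul_one, hq.2]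

theorem continuousOn_comp_tensLP [Fintype K] {f : (K × L → ℝ) → ℝ} {P : L → K → ℝ}
    (hf : ContinuousOn f (stdSimplex ℝ (K × L))) (hP : ∀ l, P l ∈ stdSimplex ℝ K) :
    ContinuousOn (fun q => f (tensLP q P)) (stdSimplex ℝ L) := by
  have tensLP_continuous : Continuous fun q : L → ℝ => tensLP q P := by
    unfold tensLP
    fun_prop
  exact hf.comp tensLP_continuous.continuousOn fun _ hq => tensLP_mem_stdSimplex hq hP

variable [DecidableEq L]

variable (L) in
/-- The coordinates `l ↦ p(e_l)` of a linear form `p` on `ℝ^L`. They identify the dual of `ℝ^L`,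
where derivatives live, with `ℝ^L`, which contains `Δ(L)`. -/
noncomputable def dualCoords : StrongDual ℝ (L → ℝ) ≃L[ℝ] (L → ℝ) :=
  ContinuousLinearEquiv.piRing L

theorem dualCoords_apply (p : StrongDual ℝ (L → ℝ)) (l : L) :
    dualCoords L p l = p (Pi.single l 1) :=
  rfl

theorem sum_dualCoords_mul (p : StrongDual ℝ (L → ℝ)) (η : L → ℝ) :
    ∑ l, dualCoords L p l * η l = p η := by
  calc
    ∑ l, dualCoords L p l * η l = ∑ l, p (η l • Pi.single l 1) := by
      simp only [dualCoords_apply, map_smul, smul_eq_mul, mul_comm]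
    _ = p η := by rw [← map_sum, ← pi_eq_sum_univ' η]

theorem WflatL_eq_concaveConjugate (W : (K × L → ℝ) → ℝ) (P : L → K → ℝ) :
    WflatL W P = concaveConjugate (dualCoords L ⁻¹' stdSimplex ℝ L)
      (fun p => W (tensLP (dualCoords L p) P)) := by
  funext η
  simp only [WflatL, concaveConjugate, ← sum_dualCoords_mul]
  conv_lhs => rw [← image_preimage_eq (stdSimplex ℝ L) (dualCoords L).surjective, image_image]

theorem value_above_u_at_differentiability_points_general [Nonempty L]
    (u W : (K × L → ℝ) → ℝ) (P : L → K → ℝ)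
    (hu : ContinuousOn (fun q => u (tensLP q P)) (stdSimplex ℝ L))
    (hW : ContinuousOn (fun q => W (tensLP q P)) (stdSimplex ℝ L))
    (hsuper : IsViscositySupersolution
      (fun η r p => -r + p η + u (tensLP (fun l => p (Pi.single l 1)) P)) (WflatL W P))
    (η₀ : L → ℝ) (hdiff : DifferentiableAt ℝ (WflatL W P) η₀) :
    (fun l => fderiv ℝ (WflatL W P) η₀ (Pi.single l 1)) ∈ stdSimplex ℝ L ∧
      u (tensLP (fun l => fderiv ℝ (WflatL W P) η₀ (Pi.single l 1)) P)
        ≤ W (tensLP (fun l => fderiv ℝ (WflatL W P) η₀ (Pi.single l 1)) P) := by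
  have hS : IsCompact (dualCoords L ⁻¹' stdSimplex ℝ L) :=
    (dualCoords L).toHomeomorph.isCompact_preimage.mpr (isCompact_stdSimplex ℝ L)
  have hne : (dualCoords L ⁻¹' stdSimplex ℝ L).Nonempty :=
    Nonempty.preimage ⟨_, single_mem_stdSimplex ℝ (Classical.arbitrary L)⟩ (dualCoords L).surjective
  have hcoords : ContinuousOn (dualCoords L) (dualCoords L ⁻¹' stdSimplex ℝ L) :=
    (dualCoords L).continuous.continuousOn
  rw [WflatL_eq_concaveConjugate] at hsuper hdiff ⊢
  exact IsViscositySupersolution.fderiv_concaveConjugate_mem_and_le hS hne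
    (hW.comp hcoords (mapsTo_preimage _ _)) (hu.comp hcoords (mapsTo_preimage _ _)) hsuper hdiff

end Simplex

/-- If `W` is Lipschitz, `L`-convex, and for every `P` the map `η ↦ W_L^♭(P,η)` is a
viscosity super-solution of `−w(η) + ⟨Dw(η),η⟩ + u_L(P,Dw(η)) ≤ 0` on `ℝ^L`, then at
any point `η₀` of differentiability of `η ↦ W_L^♭(P₀,η)` one has
`q₀ := ∇_η W_L^♭(P₀,η₀) ∈ Δ(L)` and `W(q₀⊗P₀) ≥ u(q₀⊗P₀)`. -/
theorem value_above_u_at_differentiability_points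
    {K L : Type*} [Fintype K] [Fintype L] [Nonempty K] [Nonempty L] [DecidableEq L]
    (u : ((K × L) → ℝ) → ℝ) (hu : ContinuousOn u (stdSimplex ℝ (K × L)))
    (W : ((K × L) → ℝ) → ℝ)
    (hWlip : ∃ C : NNReal, LipschitzOnWith C W (stdSimplex ℝ (K × L)))
    (hWconv : ∀ P : L → K → ℝ, (∀ l, P l ∈ stdSimplex ℝ K) →
      ConvexOn ℝ (stdSimplex ℝ L) (fun q => W (tensLP q P)))
    (hsuper : ∀ P : L → K → ℝ, (∀ l, P l ∈ stdSimplex ℝ K) →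
      ∀ φ : (L → ℝ) → ℝ, ContDiff ℝ 1 φ →
      ∀ η : L → ℝ, IsLocalMin (fun z => WflatL W P z - φ z) η →
        -(WflatL W P η) + fderiv ℝ φ η η
          + u (tensLP (fun l => fderiv ℝ φ η (Pi.single l 1)) P) ≤ 0)
    (P₀ : L → K → ℝ) (hP₀ : ∀ l, P₀ l ∈ stdSimplex ℝ K)
    (η₀ : L → ℝ) (hdiff : DifferentiableAt ℝ (fun η => WflatL W P₀ η) η₀) :
    (fun l => fderiv ℝ (fun η => WflatL W P₀ η) η₀ (Pi.single l 1)) ∈ stdSimplex ℝ L ∧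
    u (tensLP (fun l => fderiv ℝ (fun η => WflatL W P₀ η) η₀ (Pi.single l 1)) P₀)
      ≤ W (tensLP (fun l => fderiv ℝ (fun η => WflatL W P₀ η) η₀ (Pi.single l 1)) P₀) := by
  obtain ⟨_, hC⟩ := hWlip
  exact value_above_u_at_differentiability_points_general u W P₀ (continuousOn_comp_tensLP hu hP₀)
    (continuousOn_comp_tensLP hC.continuousOn hP₀) (hsuper P₀ hP₀) η₀ hdiff
end

section
/- Let u : Δ(K×L) → ℝ be continuous and let W : Δ(K×L) → ℝ be Lipschitz continuous and K-concave, i.e. p ↦ W(p⊗Q) is concave on Δ(K) for every Q ∈ Δ(L)^K. Assume that for every Q ∈ Δ(L)^K, the map ζ ↦ W_K^♯(ζ,Q) := sup_{p∈Δ(K)} W(p⊗Q) − ⟨p,ζ⟩ is a viscosity sub-solution on ℝ^K of −w(ζ) + ⟨Dw(ζ),ζ⟩ + u_K(−Dw(ζ),Q) ≥ 0 (i.e. for every C¹ function φ such that W_K^♯(·,Q) − φ has a local maximum at ζ, one has −W_K^♯(ζ,Q) + ⟨Dφ(ζ),ζ⟩ + u(−Dφ(ζ) ⊗ Q) ≥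 0). Then for every Q ∈ Δ(L)^K and every extreme point p of the concave function p ↦ W(p⊗Q) on Δ(K), one has W(p⊗Q) ≤ u(p⊗Q). -/
/-- `p ⊗ Q ∈ Δ(K×L)`: `(p ⊗ Q)(k,ℓ) = p(k) Q(k)(ℓ)`. -/
def tensKQ {K L : Type*} (p : K → ℝ) (Q : K → L → ℝ) : (K × L) → ℝ :=
  fun kl => p kl.1 * Q kl.1 kl.2

/-- `W_K^♯(ζ, Q) = sup_{p ∈ Δ(K)} W(p⊗Q) − ⟨p, ζ⟩`. -/
noncomputable def WsharpK {K L : Type*} [Fintype K]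
    (W : ((K × L) → ℝ) → ℝ) (ζ : K → ℝ) (Q : K → L → ℝ) : ℝ :=
  sSup ((fun p => W (tensKQ p Q) - ∑ k, p k * ζ k) '' stdSimplex ℝ K)

/-- `p` is an extreme point of `φ` on `Δ(K)`: whenever `(p, φ p)` is a convex
combination, with positive weights, of points `(p_r, φ (p_r))` with `p_r ∈ Δ(K)`,
all the `p_r` equal `p`. -/
def IsExtremePointOf {K : Type*} [Fintype K] (φ : (K → ℝ) → ℝ) (p : K → ℝ) : Prop :=
  p ∈ stdSimplex ℝ K ∧
  ∀ (m : ℕ) (lam : Fin m → ℝ) (ps : Fin m → (K → ℝ)),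
    lam ∈ stdSimplex ℝ (Fin m) → (∀ r, 0 < lam r) → (∀ r, ps r ∈ stdSimplex ℝ K) →
    (∑ r, lam r • ps r) = p → (∑ r, lam r * φ (ps r)) = φ p →
    ∀ r, ps r = p

/-!
An extreme point `p` of a concave `f` is one for which `(p, f p)` is extreme in the hypograph of
`f`. By Carathéodory's theorem the convex hull of the graph of `f` away from `p` is compact, and it
misses the vertical ray above `(p, f p)`, so some `f + a` with `a` linear is strictly larger at `p`
than away from `p`. Maximizing `f + a + ε |· - p|²` for small `ε` gives `q` close to `p` at which
some `f - ⟨·, ζ⟩` has its maximum with margin `ε |· - q|²`. Dually, the conjugate of `f` is touched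
from above at `ζ` by the paraboloid `z ↦ f q - ⟨q, z⟩ + |z - ζ|² / (4ε)`, whose gradient at `ζ` is
`-q`; the viscosity inequality there reads `f q ≤ v q`, and `q → p` concludes.
-/

open Set

theorem nonneg_of_forall_nonneg_lt_add_mul {b c d : ℝ} (h : ∀ r, 0 ≤ r → c < d + r * b) :
    0 ≤ b := by
  by_contra! hb
  have hcd : c < d := by simpa using h 0 le_rfl
  have := h ((d - c) / -b) (div_nonneg (sub_nonneg.2 hcd.le) (neg_nonneg.2 hb.le))
  rw [div_neg, neg_mul, div_mul_cancel₀ _ hb.ne] at this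
  linarith

section ConvexHull

variable {E : Type*} [AddCommGroup E] [Module ℝ E] [FiniteDimensional ℝ E]

theorem convexHull_eq_biUnion_image_stdSimplex_prod (s : Set E) :
    convexHull ℝ s = ⋃ n ∈ Iic (Module.finrank ℝ E + 1),
      (fun wz : (Fin n → ℝ) × (Fin n → E) => ∑ i, wz.1 i • wz.2 i) ''
        (stdSimplex ℝ (Fin n) ×ˢ univ.pi fun _ => s) := by
  apply Subset.antisymm
  · intro x hx
    obtain ⟨ι, _, z, w, hzs, hz, hw, hw1, hwz⟩ := eq_pos_convex_span_of_mem_convexHull hx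
    have hcard : Fintype.card ι ≤ Module.finrank ℝ E + 1 :=
      hz.card_le_finrank_succ.trans (Nat.succ_le_succ (Submodule.finrank_le _))
    let e := (Fintype.equivFin ι).symm
    refine mem_biUnion hcard ⟨(w ∘ e, z ∘ e), ⟨⟨fun i => (hw (e i)).le, ?_⟩, ?_⟩, ?_⟩
    · exact (e.sum_comp w).trans hw1
    · exact fun i _ => hzs (mem_range_self (e i))
    · exact (e.sum_comp fun i => w i • z i).trans hwz
  · refine iUnion₂_subset fun n _ => ?_
    rintro _ ⟨⟨w, z⟩, ⟨hw, hz⟩, rfl⟩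
    exact mem_convexHull_of_exists_fintype w z hw.1 hw.2 (fun i => hz i (mem_univ i)) rfl

theorem isCompact_convexHull_of_finiteDimensional [TopologicalSpace E] [ContinuousAdd E]
    [ContinuousSMul ℝ E] {s : Set E} (hs : IsCompact s) : IsCompact (convexHull ℝ s) := by
  rw [convexHull_eq_biUnion_image_stdSimplex_prod]
  refine (finite_Iic _).isCompact_biUnion fun n _ => ?_
  exact ((isCompact_stdSimplex ℝ (Fin n)).prod (isCompact_univ_pi fun _ => hs)).image (by fun_prop)

end ConvexHull

section Hypograph

variable {E : Type*} [AddCommGroup E] [Module ℝ E] {s t : Set E} {f : E → ℝ} {p : E}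

/-- The hypograph of `f` over `s`. An extreme point of a concave function is a point `p` such that
`(p, f p)` is an extreme point of this set. -/
def hypographOn (s : Set E) (f : E → ℝ) : Set (E × ℝ) :=
  {x | x.1 ∈ s ∧ x.2 ≤ f x.1}

theorem disjoint_convexHull_graph_vertical_ray (hf : ConcaveOn ℝ s f) (hts : t ⊆ s) (hpt : p ∉ t)
    (hp : (p, f p) ∈ (hypographOn s f).extremePoints ℝ) :
    Disjoint (convexHull ℝ ((fun x => (x, f x)) '' t)) ({p} ×ˢ Ici (f p)) := by
  have hull_subset : convexHull ℝ ((fun x => (x, f x)) '' t) ⊆ hypographOn s f :=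
    convexHull_min (image_subset_iff.2 fun x hx => ⟨hts hx, le_rfl⟩) hf.convex_hypograph
  rw [Set.disjoint_left]
  rintro ⟨x, y⟩ hy ⟨hxp, hpy⟩
  obtain rfl : x = p := hxp
  obtain rfl : y = f x := (hull_subset hy).2.antisymm hpy
  obtain ⟨z, hzt, hzx⟩ := extremePoints_convexHull_subset
    (inter_extremePoints_subset_extremePoints_of_subset hull_subset ⟨hy, hp⟩)
  obtain rfl : z = x := congrArg Prod.fst hzx
  exact hpt hzt

variable [FiniteDimensional ℝ E] [TopologicalSpace E] [IsTopologicalAddGroup E]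
  [ContinuousSMul ℝ E] [T1Space E] [LocallyConvexSpace ℝ E]

theorem exists_forall_add_lt_of_mem_extremePoints_hypographOn (hc : ConcaveOn ℝ s f)
    (ht : IsCompact t) (hft : ContinuousOn f t) (hts : t ⊆ s) (hpt : p ∉ t)
    (hp : (p, f p) ∈ (hypographOn s f).extremePoints ℝ) :
    ∃ a : E →L[ℝ] ℝ, ∀ x ∈ t, f x + a x < f p + a p := by
  obtain ⟨g, lo, hi, hg_lo, hlohi, hg_hi⟩ := geometric_hahn_banach_compact_closed
    (convex_convexHull ℝ _)
    (isCompact_convexHull_of_finiteDimensional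
      (ht.image_of_continuousOn (continuousOn_id.prodMk hft)))
    ((convex_singleton p).prod (convex_Ici (f p))) (isClosed_singleton.prod isClosed_Ici)
    (disjoint_convexHull_graph_vertical_ray hc hts hpt hp)
  let a : E →L[ℝ] ℝ := g.comp (.inl ℝ E ℝ)
  let b : ℝ := g (0, 1)
  have g_apply (x : E) (y : ℝ) : g (x, y) = a x + y * b := by
    rw [← smul_eq_mul, ← map_smul, ContinuousLinearMap.comp_apply, ← map_add]
    simp
  have ray_above (r : ℝ) (hr : 0 ≤ r) : hi < a p + f p * b + r * b := by
    have := hg_hi (p, f p + r) ⟨rfl, le_add_of_nonneg_right hr⟩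
    rwa [g_apply, add_mul, ← add_assoc] at this
  have hb : 0 ≤ b := nonneg_of_forall_nonneg_lt_add_mul ray_above
  -- The separating hyperplane may be vertical (`b = 0`): perturb its normal by a small `c > 0`.
  obtain ⟨M, hM⟩ := ht.exists_bound_of_continuousOn (hft.sub (continuousOn_const (c := f p)))
  obtain ⟨c, hc0, hMc⟩ := exists_pos_mul_lt (sub_pos.2 hlohi) M
  have hbc : 0 < b + c := by positivity
  refine ⟨(b + c)⁻¹ • a, fun x hx => ?_⟩
  have hx_lo := hg_lo (x, f x) (subset_convexHull ℝ _ ⟨x, hx, rfl⟩)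
  have hp_hi := hg_hi (p, f p) ⟨rfl, self_mem_Ici⟩
  have hslope : (f x - f p) * c < hi - lo :=
    (mul_le_mul_of_nonneg_right ((Real.le_norm_self _).trans (hM x hx)) hc0.le).trans_lt hMc
  rw [g_apply] at hx_lo hp_hi
  have scaled : (b + c) * f x + a x < (b + c) * f p + a p := by linarith
  have := mul_lt_mul_of_pos_left scaled (inv_pos.2 hbc)
  simpa only [mul_add, inv_mul_cancel_left₀ hbc.ne', smul_apply, smul_eq_mul] using this

end Hypograph

section QuadraticallyExposed

variable {K : Type*} [Fintype K] {s : Set (K → ℝ)} {f : (K → ℝ) → ℝ} {p q : K → ℝ}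

/-- The points of `s` at which some `f - ⟨·, ζ⟩` attains its maximum over `s` with a quadratic
margin. This is the form of exposedness that dualizes to a `C¹` function touching the conjugate of
`f` from above. -/
def quadraticallyExposedPoints (s : Set (K → ℝ)) (f : (K → ℝ) → ℝ) : Set (K → ℝ) :=
  {q ∈ s | ∃ ζ : K → ℝ, ∃ ε > 0,
    ∀ x ∈ s, f x - x ⬝ᵥ ζ + ε * ((x - q) ⬝ᵥ (x - q)) ≤ f q - q ⬝ᵥ ζ}

theorem mem_quadraticallyExposedPoints_of_isMaxOn {α : K → ℝ} {ε : ℝ} (hε : 0 < ε) (hq : q ∈ s)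
    (hmax : IsMaxOn (fun x => f x + α ⬝ᵥ x + ε * ((x - p) ⬝ᵥ (x - p))) s q) :
    q ∈ quadraticallyExposedPoints s f := by
  refine ⟨hq, -α - (2 * ε) • (q - p), ε, hε, fun x hx => ?_⟩
  have hxq : f x + α ⬝ᵥ x + ε * ((x - p) ⬝ᵥ (x - p))
      ≤ f q + α ⬝ᵥ q + ε * ((q - p) ⬝ᵥ (q - p)) := hmax hx
  simp only [sub_dotProduct, dotProduct_sub, dotProduct_neg, dotProduct_smul, smul_eq_mul,
    dotProduct_comm α, dotProduct_comm p, dotProduct_comm q x] at hxq ⊢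
  linarith

theorem mem_closure_quadraticallyExposedPoints (hs : IsCompact s) (hf : ContinuousOn f s)
    (hc : ConcaveOn ℝ s f) (hp : (p, f p) ∈ (hypographOn s f).extremePoints ℝ) :
    p ∈ closure (quadraticallyExposedPoints s f) := by
  classical
  refine mem_closure_iff.2 fun U hU hpU => ?_
  have hps : p ∈ s := hp.1.1
  obtain ⟨a, ha⟩ := exists_forall_add_lt_of_mem_extremePoints_hypographOn hc (hs.diff hU)
    (hf.mono sdiff_subset) sdiff_subset (fun h => h.2 hpU) hp
  obtain ⟨α, hα⟩ := (dotProductEquiv ℝ K).surjective a.toLinearMap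
  have a_apply (x : K → ℝ) : a x = α ⬝ᵥ x := (LinearMap.congr_fun hα x).symm
  simp only [a_apply] at ha
  have hlin : ContinuousOn (fun x => f x + α ⬝ᵥ x) s := hf.add (by fun_prop)
  have hsq : ContinuousOn (fun x => (x - p) ⬝ᵥ (x - p)) s := by fun_prop
  obtain ⟨η, hη, hgap⟩ := (hs.diff hU).exists_forall_le'
    (continuousOn_const.sub (hlin.mono sdiff_subset)) fun x hx => sub_pos.2 (ha x hx)
  obtain ⟨M, hM⟩ := hs.exists_bound_of_continuousOn hsq
  obtain ⟨ε, hε, hMε⟩ := exists_pos_mul_lt hη M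
  obtain ⟨q, hq, hmax⟩ := hs.exists_isMaxOn ⟨p, hps⟩ (hlin.add (hsq.const_smul ε))
  refine ⟨q, ?_, mem_quadraticallyExposedPoints_of_isMaxOn hε hq hmax⟩
  by_contra hqU
  have hpq : f p + α ⬝ᵥ p + ε * ((p - p) ⬝ᵥ (p - p))
      ≤ f q + α ⬝ᵥ q + ε * ((q - p) ⬝ᵥ (q - p)) := hmax hps
  have hsmall : ε * ((q - p) ⬝ᵥ (q - p)) < η := by
    rw [mul_comm]
    exact (mul_le_mul_of_nonneg_right ((Real.le_norm_self _).trans (hM q hq)) hε.le).trans_lt hMε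
  have hfar : η ≤ f p + α ⬝ᵥ p - (f q + α ⬝ᵥ q) := hgap q ⟨hq, hqU⟩
  rw [sub_self, zero_dotProduct, mul_zero] at hpq
  linarith

end QuadraticallyExposed

section Viscosity

variable {K : Type*} [Fintype K] {s : Set (K → ℝ)} {f v : (K → ℝ) → ℝ} {p q ζ : K → ℝ} {ε : ℝ}

/-- The conjugate `ζ ↦ sup_{p ∈ s} f p - ⟨p, ζ⟩`, which specializes to `WsharpK`. -/
noncomputable def conjugateOn (s : Set (K → ℝ)) (f : (K → ℝ) → ℝ) (ζ : K → ℝ) : ℝ :=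
  sSup ((fun p => f p - p ⬝ᵥ ζ) '' s)

/-- `w` is a viscosity sub-solution on `ℝ^K` of `-w(ζ) + ⟨Dw(ζ), ζ⟩ + v(-Dw(ζ)) ≥ 0`. The gradient
of a test function is read off its Fréchet derivative on the standard basis. -/
def IsViscositySubsolution [DecidableEq K] (w v : (K → ℝ) → ℝ) : Prop :=
  ∀ φ : (K → ℝ) → ℝ, ContDiff ℝ 1 φ → ∀ ζ : K → ℝ, IsLocalMax (fun z => w z - φ z) ζ →
    -w ζ + fderiv ℝ φ ζ ζ + v (fun k => -fderiv ℝ φ ζ (Pi.single k 1)) ≥ 0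

theorem conjugateOn_eq_of_isMaxOn (hq : q ∈ s) (hmax : IsMaxOn (fun x => f x - x ⬝ᵥ ζ) s q) :
    conjugateOn s f ζ = f q - q ⬝ᵥ ζ :=
  IsGreatest.csSup_eq ⟨mem_image_of_mem _ hq, forall_mem_image.2 fun _ hx => hmax hx⟩

theorem neg_dotProduct_le_mul_add_inv_mul (hε : 0 < ε) (x y : K → ℝ) :
    -(x ⬝ᵥ y) ≤ ε * (x ⬝ᵥ x) + (4 * ε)⁻¹ * (y ⬝ᵥ y) := by
  simp only [dotProduct, ← Finset.sum_neg_distrib, Finset.mul_sum, ← Finset.sum_add_distrib]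
  refine Finset.sum_le_sum fun k _ => ?_
  have square : ε * (x k * x k) + (4 * ε)⁻¹ * (y k * y k) + x k * y k
      = ε * (x k + y k / (2 * ε)) ^ 2 := by
    field_simp
    ring
  have : 0 ≤ ε * (x k + y k / (2 * ε)) ^ 2 := by positivity
  linarith

theorem conjugateOn_le_of_quadratic_margin (hε : 0 < ε) (hq : q ∈ s)
    (hmargin : ∀ x ∈ s, f x - x ⬝ᵥ ζ + ε * ((x - q) ⬝ᵥ (x - q)) ≤ f q - q ⬝ᵥ ζ) (z : K → ℝ) :
    conjugateOn s f z ≤ f q - q ⬝ᵥ z + (4 * ε)⁻¹ * ((z - ζ) ⬝ᵥ (z - ζ)) := by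
  refine csSup_le ((nonempty_of_mem hq).image _) (forall_mem_image.2 fun x hx => ?_)
  have young := neg_dotProduct_le_mul_add_inv_mul hε (x - q) (z - ζ)
  have split : (x - q) ⬝ᵥ (z - ζ) = x ⬝ᵥ z - q ⬝ᵥ z - (x ⬝ᵥ ζ - q ⬝ᵥ ζ) := by
    rw [dotProduct_sub, sub_dotProduct, sub_dotProduct]
  linarith [hmargin x hx]

theorem hasFDerivAt_mul_sub_dotProduct_self_sub_dotProduct (c : ℝ) (q ζ : K → ℝ) :
    HasFDerivAt (fun z => c * ((z - ζ) ⬝ᵥ (z - ζ)) - q ⬝ᵥ z)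
      (-(dotProductBilin ℝ ℝ q).toContinuousLinearMap) ζ := by
  have hmin : IsLocalMin (fun z => (z - ζ) ⬝ᵥ (z - ζ)) ζ := .of_forall fun z => by
    simpa using dotProduct_self_star_nonneg (z - ζ)
  have hsq : HasFDerivAt (fun z => (z - ζ) ⬝ᵥ (z - ζ)) (0 : (K → ℝ) →L[ℝ] ℝ) ζ := by
    rw [← hmin.fderiv_eq_zero]
    exact DifferentiableAt.hasFDerivAt (by unfold dotProduct; fun_prop)
  convert! (hsq.const_mul c).sub (dotProductBilin ℝ ℝ q).toContinuousLinearMap.hasFDerivAt using 1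
  rw [smul_zero, zero_sub]

theorem le_of_mem_quadraticallyExposedPoints [DecidableEq K]
    (hv : IsViscositySubsolution (conjugateOn s f) v) (hq : q ∈ quadraticallyExposedPoints s f) :
    f q ≤ v q := by
  obtain ⟨hqs, ζ, ε, hε, hmargin⟩ := hq
  let φ : (K → ℝ) → ℝ := fun z => (4 * ε)⁻¹ * ((z - ζ) ⬝ᵥ (z - ζ)) - q ⬝ᵥ z
  have hφ : ContDiff ℝ 1 φ := by
    unfold φ dotProduct
    fun_prop
  have fderiv_apply (y : K → ℝ) : fderiv ℝ φ ζ y = -(q ⬝ᵥ y) := by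
    rw [(hasFDerivAt_mul_sub_dotProduct_self_sub_dotProduct _ q ζ).fderiv]
    rfl
  have conj_eq : conjugateOn s f ζ = f q - q ⬝ᵥ ζ := by
    refine conjugateOn_eq_of_isMaxOn hqs fun x hx => le_trans ?_ (hmargin x hx)
    have : 0 ≤ (x - q) ⬝ᵥ (x - q) := by simpa using dotProduct_self_star_nonneg (x - q)
    exact le_add_of_nonneg_right (mul_nonneg hε.le this)
  have touches : IsLocalMax (fun z => conjugateOn s f z - φ z) ζ := .of_forall fun z => by
    have := conjugateOn_le_of_quadratic_margin hε hqs hmargin z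
    simp only [φ, conj_eq, sub_self, zero_dotProduct, mul_zero]
    linarith
  have hsub := hv φ hφ ζ touches
  simp only [fderiv_apply, conj_eq, dotProduct_single_one, neg_neg] at hsub
  linarith

theorem value_below_u_at_extreme_points_general [DecidableEq K] (hs : IsCompact s)
    (hf : ContinuousOn f s) (hc : ConcaveOn ℝ s f) (hvp : ContinuousWithinAt v s p)
    (hsub : IsViscositySubsolution (conjugateOn s f) v)
    (hp : (p, f p) ∈ (hypographOn s f).extremePoints ℝ) : f p ≤ v p :=
  have exposed_subset : quadraticallyExposedPoints s f ⊆ s := sep_subset _ _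
  ContinuousWithinAt.closure_le (mem_closure_quadraticallyExposedPoints hs hf hc hp)
    ((hf p hp.1.1).mono exposed_subset) (hvp.mono exposed_subset)
    fun _ hq => le_of_mem_quadraticallyExposedPoints hsub hq

end Viscosity

section Simplex

variable {K L : Type*} [Fintype K]

theorem IsExtremePointOf.mem_extremePoints_hypographOn {f : (K → ℝ) → ℝ} {p : K → ℝ}
    (hp : IsExtremePointOf f p) (hf : ConcaveOn ℝ (stdSimplex ℝ K) f) :
    (p, f p) ∈ (hypographOn (stdSimplex ℝ K) f).extremePoints ℝ := by
  refine ⟨⟨hp.1, le_rfl⟩, ?_⟩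
  rintro ⟨x, y⟩ ⟨hx, hyx⟩ ⟨x', y'⟩ ⟨hx', hyx'⟩ ⟨a, b, ha, hb, hab, heq⟩
  simp only [Prod.smul_mk, Prod.mk_add_mk, Prod.mk.injEq, smul_eq_mul] at heq hyx hyx'
  obtain ⟨hxp, hyp⟩ := heq
  have jensen : a * f x + b * f x' ≤ f p := hxp ▸ hf.2 hx hx' ha.le hb.le hab
  have hay : a * y ≤ a * f x := mul_le_mul_of_nonneg_left hyx ha.le
  have hby : b * y' ≤ b * f x' := mul_le_mul_of_nonneg_left hyx' hb.le
  have graph_eq : a * f x + b * f x' = f p := by linarith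
  obtain rfl : x = p := hp.2 2 ![a, b] ![x, x']
    ⟨by simp [Fin.forall_fin_two, ha.le, hb.le], by simp [hab]⟩
    (by simp [Fin.forall_fin_two, ha, hb]) (by simp [Fin.forall_fin_two, hx, hx'])
    (by simpa using hxp) (by simpa using graph_eq) 0
  exact Prod.ext rfl (mul_left_cancel₀ ha.ne' (by linarith))

variable [Fintype L] {Q : K → L → ℝ}

theorem tensKQ_mem_stdSimplex (hQ : ∀ k, Q k ∈ stdSimplex ℝ L) {p : K → ℝ}
    (hp : p ∈ stdSimplex ℝ K) : tensKQ p Q ∈ stdSimplex ℝ (K × L) := by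
  refine ⟨fun kl => mul_nonneg (hp.1 kl.1) ((hQ kl.1).1 kl.2), ?_⟩
  simp only [tensKQ, Fintype.sum_prod_type, ← Finset.mul_sum, (hQ _).2, mul_one, hp.2]

theorem continuousOn_comp_tensKQ {g : (K × L → ℝ) → ℝ}
    (hg : ContinuousOn g (stdSimplex ℝ (K × L))) (hQ : ∀ k, Q k ∈ stdSimplex ℝ L) :
    ContinuousOn (fun p => g (tensKQ p Q)) (stdSimplex ℝ K) :=
  hg.comp (by unfold tensKQ; fun_prop) fun _ hp => tensKQ_mem_stdSimplex hQ hp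

end Simplex

/-- If `W` is Lipschitz, `K`-concave, and for every `Q` the map `ζ ↦ W_K^♯(ζ,Q)` is a
viscosity sub-solution of `−w(ζ) + ⟨Dw(ζ),ζ⟩ + u_K(−Dw(ζ),Q) ≥ 0` on `ℝ^K`, then
`W(p⊗Q) ≤ u(p⊗Q)` for every `Q ∈ Δ(L)^K` and every extreme point `p` of the concave
function `p ↦ W(p⊗Q)` on `Δ(K)`. -/
theorem value_below_u_at_extreme_points
    {K L : Type*} [Fintype K] [Fintype L] [Nonempty K] [Nonempty L] [DecidableEq K]
    (u : ((K × L) → ℝ) → ℝ) (hu : ContinuousOn u (stdSimplex ℝ (K × L)))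
    (W : ((K × L) → ℝ) → ℝ)
    (hWlip : ∃ C : NNReal, LipschitzOnWith C W (stdSimplex ℝ (K × L)))
    (hWconc : ∀ Q : K → L → ℝ, (∀ k, Q k ∈ stdSimplex ℝ L) →
      ConcaveOn ℝ (stdSimplex ℝ K) (fun p => W (tensKQ p Q)))
    (hsub : ∀ Q : K → L → ℝ, (∀ k, Q k ∈ stdSimplex ℝ L) →
      ∀ φ : (K → ℝ) → ℝ, ContDiff ℝ 1 φ →
      ∀ ζ : K → ℝ, IsLocalMax (fun z => WsharpK W z Q - φ z) ζ →
        -(WsharpK W ζ Q) + fderiv ℝ φ ζ ζ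
          + u (tensKQ (fun k => -(fderiv ℝ φ ζ (Pi.single k 1))) Q) ≥ 0) :
    ∀ Q : K → L → ℝ, (∀ k, Q k ∈ stdSimplex ℝ L) →
      ∀ p : K → ℝ, IsExtremePointOf (fun p' => W (tensKQ p' Q)) p →
        W (tensKQ p Q) ≤ u (tensKQ p Q) := by
  obtain ⟨C, hC⟩ := hWlip
  exact fun Q hQ p hp => value_below_u_at_extreme_points_general
    (f := fun p => W (tensKQ p Q)) (v := fun p => u (tensKQ p Q)) (isCompact_stdSimplex ℝ K)
    (continuousOn_comp_tensKQ hC.continuousOn hQ) (hWconc Q hQ)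
    (continuousOn_comp_tensKQ hu hQ p hp.1) (hsub Q hQ)
    (hp.mem_extremePoints_hypographOn (hWconc Q hQ))
end
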